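/- (Vanishing lemma) Let {φ_n} ⊂ X be a sequence with sup_n ∫_{ℝ³} f_n dx < ∞, where f_n = |∇φ_n|² + |A(φ_n)|² + |φ_n − P|⁶, and let {D_n} be a sequence of measurable subsets of ℝ³. If for every R > 0, lim_{n→∞} sup_{y ∈ ℝ³} ∫_{B(y,R) ∩ D_n} f_n dx = 0, then lim_{n→∞} ∫_{D_n} det(φ_n − P, ∇φ_n) dx = 0. -/

import Mathlib

/- Common setting: Skyrme maps φ : ℝ³ → S³ ⊂ ℝ⁴ with weak partial derivatives. -/

open MeasureTheory Real Filter
open scoped Topology ENNReal BigOperators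

noncomputable section

abbrev R3 : Type := Fin 3 → ℝ
abbrev R4 : Type := Fin 4 → ℝ

/-- Euclidean dot product on ℝ⁴. -/
def dot (u v : R4) : ℝ := ∑ a, u a * v a

/-- Squared Euclidean norm on ℝ⁴. -/
def nsq (u : R4) : ℝ := dot u u

/-- |u∧v|² = |u|²|v|² − ⟨u,v⟩². -/
def wedgeSq (u v : R4) : ℝ := nsq u * nsq v - (dot u v) ^ 2

/-- Gram determinant of three vectors of ℝ⁴. -/
def gram (u v w : R4) : ℝ :=
  Matrix.det !![dot u u, dot u v, dot u w; dot v u, dot v v, dot v w; dot w u, dot w v, dot w w]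

/-- Determinant of the 4×4 matrix with columns a, b, c, d. -/
def det4 (a b c d : R4) : ℝ := Matrix.det (Matrix.of fun i j => ![a, b, c, d] j i)

/-- Smooth compactly supported test functions on ℝ³. -/
def IsTestFun {E : Type*} [NormedAddCommGroup E] [NormedSpace ℝ E] (ψ : R3 → E) : Prop :=
  ContDiff ℝ (⊤ : ℕ∞) ψ ∧ HasCompactSupport ψ

/-- A weakly differentiable map φ : ℝ³ → S³ ⊂ ℝ⁴ together with its weak
partial derivatives `pderiv i = ∂ᵢφ`. -/
structure SkyrmeMap where
  toFun : R3 → R4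
  pderiv : Fin 3 → R3 → R4
  meas : Measurable toFun
  pderiv_locInt : ∀ i, LocallyIntegrable (pderiv i) volume
  sphere : ∀ᵐ x : R3, nsq (toFun x) = 1
  weak : ∀ (i : Fin 3) (a : Fin 4) (ψ : R3 → ℝ), IsTestFun ψ →
    ∫ x : R3, fderiv ℝ ψ x (Pi.single i 1) * toFun x a
      = - ∫ x : R3, ψ x * pderiv i x a

/-- |∇φ|² = Σᵢ |∂ᵢφ|². -/
def gradSq (φ : SkyrmeMap) (x : R3) : ℝ := ∑ i, nsq (φ.pderiv i x)

/-- |A(φ)|² = Σᵢⱼ |∂ᵢφ∧∂ⱼφ|². -/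
def ASq (φ : SkyrmeMap) (x : R3) : ℝ := ∑ i, ∑ j, wedgeSq (φ.pderiv i x) (φ.pderiv j x)

/-- The Skyrme energy density |∇φ|² + |A(φ)|². -/
def energyDensity (φ : SkyrmeMap) (x : R3) : ℝ := gradSq φ x + ASq φ x

/-- φ ∈ X : finite Skyrme energy. -/
def memX (φ : SkyrmeMap) : Prop := Integrable (energyDensity φ) volume

/-- The Skyrme energy ℰ(φ). -/
def energy (φ : SkyrmeMap) : ℝ := ∫ x, energyDensity φ x

/-- det(φ, ∇φ)(x). -/
def detDen (φ : SkyrmeMap) (x : R3) : ℝ :=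
  det4 (φ.toFun x) (φ.pderiv 0 x) (φ.pderiv 1 x) (φ.pderiv 2 x)

/-- The topological degree d(φ) = (1/(2π²)) ∫ det(φ,∇φ). -/
def degree (φ : SkyrmeMap) : ℝ := (1 / (2 * π ^ 2)) * ∫ x, detDen φ x

/-- I_k = inf of the energy over maps of degree k. -/
def Skyrme.I (k : ℤ) : ℝ :=
  sInf {E : ℝ | ∃ φ : SkyrmeMap, memX φ ∧ degree φ = (k : ℝ) ∧ energy φ = E}

/-- The north pole P = (0,0,0,1) of S³. -/
def northPole : R4 := ![0, 0, 0, 1]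

/-- The Euclidean ball B(y,r) in ℝ³. -/
def eball (y : R3) (r : ℝ) : Set R3 := {x | ∑ i, (x i - y i) ^ 2 < r ^ 2}

/-!
The 4×4 determinant is `⟨φ - P, ∂₁φ × ∂₂φ × ∂₃φ⟩` for the generalized cross product of `ℝ⁴`, whose
squared length is the Gram determinant of the partial derivatives. That Gram determinant is bounded
both by `|∇φ|² |A(φ)|²` and, to the power `2/3`, by `|A(φ)|²`. Writing `e` for the energy density,
it follows that `|det(φ - P, ∇φ)| ≤ ε e + |φ - P|¹² / ε¹¹` for every `ε > 0`, so it suffices to show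
that `∫_{D_n} |φ_n - P|¹² → 0`.

Since `φ` is bounded, one factor `|φ(x) - P|⁶` may be replaced by `|φ(x + h) - P|⁶` at the cost of
`|φ(x + h) - φ(x)|²`, whose integral is at most `|h|² ∫ |∇φ|²`. After averaging over `|h| < ρ`, the
remaining product is controlled by `sup_y ∫_{B(y,ρ) ∩ D_n} |φ_n - P|⁶`, which vanishes as `n → ∞` by
hypothesis, and the error is `O(ρ²)`.
-/

section Averages

variable {α β G F : Type*} [MeasurableSpace α] [MeasurableSpace β] [NormedAddCommGroup F]
  [NormedSpace ℝ F]

theorem eLpNorm_integral_le_eLpNorm_prod {μ : Measure α} {ν : Measure β}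
    [IsProbabilityMeasure ν] {f : α × β → F} (hf : AEStronglyMeasurable f (μ.prod ν))
    {p : ℝ≥0∞} (hp : 1 ≤ p) :
    eLpNorm (fun x => ∫ y, f (x, y) ∂ν) p μ ≤ eLpNorm f p (μ.prod ν) := by
  have h_slice : ∀ᵐ x ∂μ, ‖∫ y, f (x, y) ∂ν‖ₑ ≤ eLpNorm (fun y => f (x, y)) p ν := by
    filter_upwards [hf.prodMk_left] with x hx
    calc ‖∫ y, f (x, y) ∂ν‖ₑ ≤ eLpNorm (fun y => f (x, y)) 1 ν := by
          rw [eLpNorm_one_eq_lintegral_enorm]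
          exact enorm_integral_le_lintegral_enorm _
      _ ≤ eLpNorm (fun y => f (x, y)) p ν := eLpNorm_le_eLpNorm_of_exponent_le hp hx
  by_cases hp_top : p = ∞
  · subst hp_top
    simp only [eLpNorm_exponent_top] at h_slice ⊢
    refine eLpNormEssSup_le_of_ae_enorm_bound ?_
    filter_upwards [h_slice, Measure.ae_ae_of_ae_prod (enorm_ae_le_eLpNormEssSup f (μ.prod ν))]
      with x hx hfx
    exact hx.trans (eLpNormEssSup_le_of_ae_enorm_bound hfx)
  · have hp_pos : 0 < p.toReal := ENNReal.toReal_pos (one_pos.trans_le hp).ne' hp_top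
    have hp_zero : p ≠ 0 := (one_pos.trans_le hp).ne'
    simp only [eLpNorm_eq_lintegral_rpow_enorm_toReal hp_zero hp_top] at h_slice ⊢
    rw [lintegral_prod _ (hf.enorm.pow_const _)]
    refine ENNReal.rpow_le_rpow (lintegral_mono_ae ?_) (by positivity)
    filter_upwards [h_slice] with x hx
    rwa [← ENNReal.le_rpow_inv_iff hp_pos, ← one_div]

variable [AddGroup G] [MeasurableSpace G] [MeasurableAdd₂ G] {μ : Measure G} [SFinite μ]
  [μ.IsAddRightInvariant] {ν : Measure β} [IsProbabilityMeasure ν] {g : β → G}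

theorem measurePreserving_add_comp_prod (hg : Measurable g) :
    MeasurePreserving (fun z : G × β => z.1 + g z.2) (μ.prod ν) μ := by
  have h_shear : MeasurePreserving (fun z : β × G => (z.1, z.2 + g z.1)) (ν.prod μ) (ν.prod μ) :=
    (MeasurePreserving.id ν).skew_product (g := fun b x => x + g b) (by fun_prop)
      (Eventually.of_forall fun b => map_add_right_eq_self μ (g b))
  exact (measurePreserving_snd.comp h_shear).comp Measure.measurePreserving_swap

theorem eLpNorm_integral_translate_le (hg : Measurable g) {f : G → F}
    (hf : AEStronglyMeasurable f μ) {p : ℝ≥0∞} (hp : 1 ≤ p) :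
    eLpNorm (fun x => ∫ b, f (x + g b) ∂ν) p μ ≤ eLpNorm f p μ := by
  have h_add := measurePreserving_add_comp_prod (μ := μ) (ν := ν) hg
  calc eLpNorm (fun x => ∫ b, f (x + g b) ∂ν) p μ
      ≤ eLpNorm (f ∘ fun z : G × β => z.1 + g z.2) p (μ.prod ν) :=
        eLpNorm_integral_le_eLpNorm_prod (hf.comp_measurePreserving h_add) hp
    _ = eLpNorm f p μ := eLpNorm_comp_measurePreserving hf h_add

end Averages

section WeakLineDeriv

open ContinuousLinearMap
open scoped Convolution ContDiff

variable {E F : Type*} [NormedAddCommGroup E] [NormedSpace ℝ E] [MeasurableSpace E]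
  [NormedAddCommGroup F] [NormedSpace ℝ F] {μ : Measure E} {u v : E → F} {h : E} {ρ : E → ℝ}

/-- `v` is the weak derivative of `u` in the direction `h`: integration by parts against smooth
compactly supported functions holds. Local integrability of `u` and `v` is not part of the
notion. -/
def HasWeakLineDeriv (μ : Measure E) (u v : E → F) (h : E) : Prop :=
  ∀ ψ : E → ℝ, ContDiff ℝ ∞ ψ → HasCompactSupport ψ →
    ∫ x, fderiv ℝ ψ x h • u x ∂μ = -∫ x, ψ x • v x ∂μ

namespace HasWeakLineDeriv

theorem sum_smul {ι : Type*} {s : Finset ι} {w : ι → E → F} {e : ι → E} [OpensMeasurableSpace E]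
    (hw : ∀ i ∈ s, HasWeakLineDeriv μ u (w i) (e i)) (hw_int : ∀ i ∈ s, LocallyIntegrable (w i) μ)
    (hu : LocallyIntegrable u μ) (c : ι → ℝ) :
    HasWeakLineDeriv μ u (fun x => ∑ i ∈ s, c i • w i x) (∑ i ∈ s, c i • e i) := by
  intro ψ hψ hψ_supp
  have h_deriv (i : ι) : Integrable (fun x => c i • fderiv ℝ ψ x (e i) • u x) μ :=
    (hu.integrable_smul_left_of_hasCompactSupport
      ((hψ.continuous_fderiv (by simp)).clm_apply continuous_const)
      (hψ_supp.fderiv_apply ℝ _)).smul (c i)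
  have h_val (i : ι) (hi : i ∈ s) : Integrable (fun x => c i • ψ x • w i x) μ :=
    ((hw_int i hi).integrable_smul_left_of_hasCompactSupport hψ.continuous hψ_supp).smul (c i)
  simp only [map_sum, map_smul, smul_eq_mul, Finset.sum_smul, Finset.smul_sum, mul_smul,
    smul_comm (ψ _)]
  rw [integral_finsetSum _ fun i _ => h_deriv i, integral_finsetSum _ h_val,
    ← Finset.sum_neg_distrib]
  refine Finset.sum_congr rfl fun i hi => ?_
  rw [integral_smul, integral_smul, hw i hi ψ hψ hψ_supp, smul_neg]

variable [BorelSpace E] [FiniteDimensional ℝ E] [μ.IsAddHaarMeasure]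

theorem fderiv_convolution_apply (hv : HasWeakLineDeriv μ u v h)
    (hu : LocallyIntegrable u μ) (hρ : ContDiff ℝ ∞ ρ) (hρ_supp : HasCompactSupport ρ) (x : E) :
    (fderiv ℝ ρ ⋆[(lsmul ℝ ℝ).precompL E, μ] u) x h = (ρ ⋆[lsmul ℝ ℝ, μ] v) x := by
  have h_reflect (y : E) : fderiv ℝ (fun y => ρ (x - y)) y h = -fderiv ℝ ρ (x - y) h := by
    have h_diff : DifferentiableAt ℝ ρ (x - y) := hρ.differentiable (by simp) _
    simpa [Function.comp_def] using DFunLike.congr_fun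
      (h_diff.hasFDerivAt.comp y ((hasFDerivAt_id y).const_sub x)).fderiv h
  have h_exists : ConvolutionExistsAt (fderiv ℝ ρ) u x ((lsmul ℝ ℝ).precompL E) μ :=
    (hρ_supp.fderiv ℝ).convolutionExists_left _ (hρ.continuous_fderiv (by simp)) hu x
  have h_test := hv (fun y => ρ (x - y)) (hρ.comp (contDiff_const.sub contDiff_id))
    (hρ_supp.comp_homeomorph (Homeomorph.subLeft x))
  simp only [h_reflect, neg_smul, integral_neg, neg_inj] at h_test
  rw [convolution_lsmul_swap, ← h_test, ← integral_sub_left_eq_self _ μ x, convolution_def,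
    ContinuousLinearMap.integral_apply h_exists]
  simp [ContinuousLinearMap.precompL_apply]

theorem convolution_translate_sub [CompleteSpace F] (hv : HasWeakLineDeriv μ u v h)
    (hu : LocallyIntegrable u μ) (hv_int : LocallyIntegrable v μ) (hρ : ContDiff ℝ ∞ ρ)
    (hρ_supp : HasCompactSupport ρ) (x : E) :
    (ρ ⋆[lsmul ℝ ℝ, μ] u) (x + h) - (ρ ⋆[lsmul ℝ ℝ, μ] u) x =
      ∫ t in Set.Ioc (0 : ℝ) 1, (ρ ⋆[lsmul ℝ ℝ, μ] v) (x + t • h) := by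
  have h_deriv (t : ℝ) : HasDerivAt (fun t : ℝ => (ρ ⋆[lsmul ℝ ℝ, μ] u) (x + t • h))
      ((ρ ⋆[lsmul ℝ ℝ, μ] v) (x + t • h)) t := by
    have h_line : HasDerivAt (fun t : ℝ => x + t • h) h t := by
      simpa using ((hasDerivAt_id t).smul_const h).const_add x
    rw [← hv.fderiv_convolution_apply hu hρ hρ_supp]
    exact (hρ_supp.hasFDerivAt_convolution_left _ (hρ.of_le (by simp)) hu _).comp_hasDerivAt t
      h_line
  have h_cont : Continuous (ρ ⋆[lsmul ℝ ℝ, μ] v) :=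
    hρ_supp.continuous_convolution_left _ hρ.continuous hv_int
  rw [← intervalIntegral.integral_of_le zero_le_one,
    intervalIntegral.integral_eq_sub_of_hasDerivAt (fun t _ => h_deriv t)
      ((h_cont.comp (by fun_prop)).intervalIntegrable _ _)]
  simp

end HasWeakLineDeriv

variable [BorelSpace E] [FiniteDimensional ℝ E] [μ.IsAddHaarMeasure]

theorem eLpNorm_convolution_le (hρ : Measurable ρ) (hρ_nonneg : 0 ≤ ρ) (hρ_one : ∫ x, ρ x ∂μ = 1)
    (hv : AEStronglyMeasurable v μ) {p : ℝ≥0∞} (hp : 1 ≤ p) :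
    eLpNorm (ρ ⋆[lsmul ℝ ℝ, μ] v) p μ ≤ eLpNorm v p μ := by
  have hρ_int : Integrable ρ μ := .of_integral_ne_zero (by simp [hρ_one])
  have : IsProbabilityMeasure (μ.withDensity fun t => ENNReal.ofReal (ρ t)) := by
    constructor
    rw [withDensity_apply _ MeasurableSet.univ, Measure.restrict_univ,
      ← ofReal_integral_eq_lintegral_ofReal hρ_int (ae_of_all _ hρ_nonneg), hρ_one,
      ENNReal.ofReal_one]
  have h_conv : (ρ ⋆[lsmul ℝ ℝ, μ] v) =
      fun x => ∫ t, v (x + -t) ∂μ.withDensity fun t => ENNReal.ofReal (ρ t) := by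
    ext x
    rw [integral_withDensity_eq_integral_toReal_smul (by fun_prop) (by simp), convolution_lsmul]
    simp only [ENNReal.toReal_ofReal (hρ_nonneg _), sub_eq_add_neg]
  rw [h_conv]
  exact eLpNorm_integral_translate_le measurable_neg hv hp

theorem HasWeakLineDeriv.eLpNorm_convolution_translate_sub_le [CompleteSpace F]
    (hv : HasWeakLineDeriv μ u v h) (hu : LocallyIntegrable u μ) (hv_int : LocallyIntegrable v μ)
    (hρ : ContDiff ℝ ∞ ρ) (hρ_supp : HasCompactSupport ρ) (hρ_nonneg : 0 ≤ ρ)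
    (hρ_one : ∫ x, ρ x ∂μ = 1) {p : ℝ≥0∞} (hp : 1 ≤ p) :
    eLpNorm (fun x => (ρ ⋆[lsmul ℝ ℝ, μ] u) (x + h) - (ρ ⋆[lsmul ℝ ℝ, μ] u) x) p μ ≤
      eLpNorm v p μ := by
  have : IsProbabilityMeasure (volume.restrict (Set.Ioc (0 : ℝ) 1)) := ⟨by simp⟩
  simp only [hv.convolution_translate_sub hu hv_int hρ hρ_supp]
  calc eLpNorm (fun x => ∫ t in Set.Ioc (0 : ℝ) 1, (ρ ⋆[lsmul ℝ ℝ, μ] v) (x + t • h)) p μ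
      ≤ eLpNorm (ρ ⋆[lsmul ℝ ℝ, μ] v) p μ :=
        eLpNorm_integral_translate_le (by fun_prop)
          (hρ_supp.continuous_convolution_left _ hρ.continuous hv_int).aestronglyMeasurable hp
    _ ≤ eLpNorm v p μ :=
        eLpNorm_convolution_le hρ.continuous.measurable hρ_nonneg hρ_one
          hv_int.aestronglyMeasurable hp

theorem HasWeakLineDeriv.eLpNorm_translate_sub_le [CompleteSpace F] (hv : HasWeakLineDeriv μ u v h)
    (hu : LocallyIntegrable u μ) (hv_int : LocallyIntegrable v μ) {p : ℝ≥0∞} (hp : 1 ≤ p) :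
    eLpNorm (fun x => u (x + h) - u x) p μ ≤ eLpNorm v p μ := by
  let bump (k : ℕ) : ContDiffBump (0 : E) :=
    { rIn := 1 / (k + 1), rOut := 2 * (1 / (k + 1)), rIn_pos := by positivity,
      rIn_lt_rOut := lt_two_mul_self (by positivity) }
  have h_rOut : Tendsto (fun k => (bump k).rOut) atTop (𝓝 0) := by
    simpa only [mul_zero] using (tendsto_one_div_add_atTop_nhds_zero_nat (𝕜 := ℝ)).const_mul 2
  have h_lim : ∀ᵐ x ∂μ, Tendsto (fun k => ((bump k).normed μ ⋆[lsmul ℝ ℝ, μ] u) x) atTop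
      (𝓝 (u x)) :=
    ContDiffBump.ae_convolution_tendsto_right_of_locallyIntegrable h_rOut
      (Eventually.of_forall fun k => le_refl (2 * (bump k).rIn)) hu
  have h_cont (k : ℕ) : Continuous ((bump k).normed μ ⋆[lsmul ℝ ℝ, μ] u) :=
    (bump k).hasCompactSupport_normed.continuous_convolution_left _ (bump k).continuous_normed hu
  have h_bound (k : ℕ) := hv.eLpNorm_convolution_translate_sub_le hu hv_int
    (bump k).contDiff_normed (bump k).hasCompactSupport_normed (bump k).nonneg_normed
    (bump k).integral_normed hp
  refine Lp.eLpNorm_le_of_ae_tendsto (u := atTop) (Eventually.of_forall h_bound)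
    (fun k => (((h_cont k).comp (by fun_prop)).sub (h_cont k)).aestronglyMeasurable) ?_
  filter_upwards [h_lim, (measurePreserving_add_right μ h).quasiMeasurePreserving.ae h_lim]
    with x hx hxh
  exact hxh.sub hx

theorem HasWeakLineDeriv.lintegral_enorm_sq_translate_sub_le [CompleteSpace F]
    (hv : HasWeakLineDeriv μ u v h) (hu : LocallyIntegrable u μ)
    (hv_int : LocallyIntegrable v μ) :
    ∫⁻ x, ‖u (x + h) - u x‖ₑ ^ 2 ∂μ ≤ ∫⁻ x, ‖v x‖ₑ ^ 2 ∂μ := by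
  have h_sq (f : E → F) : eLpNorm f 2 μ ^ 2 = ∫⁻ x, ‖f x‖ₑ ^ 2 ∂μ := by
    simpa using eLpNorm_nnreal_pow_eq_lintegral (f := f) (μ := μ) (two_ne_zero (α := NNReal))
  rw [← h_sq, ← h_sq]
  gcongr
  exact hv.eLpNorm_translate_sub_le hu hv_int one_le_two

end WeakLineDeriv

theorem setLIntegral_lintegral_translate_le {G : Type*} [AddGroup G] [MeasurableSpace G]
    [MeasurableAdd₂ G] [MeasurableNeg G] {μ ν : Measure G} [SFinite μ] [SFinite ν]
    [μ.IsAddLeftInvariant] {B : Set G} (hB : MeasurableSet B) {κ : ℝ≥0∞}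
    (hκ : ∀ y, ν {x | -x + y ∈ B} ≤ κ) {w : G → ℝ≥0∞} (hw : Measurable w) :
    ∫⁻ h in B, ∫⁻ x, w (x + h) ∂ν ∂μ ≤ κ * ∫⁻ y, w y ∂μ := by
  have h_window (x : G) :
      ∫⁻ h in B, w (x + h) ∂μ = ∫⁻ y, {x | -x + y ∈ B}.indicator (fun _ => w y) x ∂μ := by
    rw [← lintegral_indicator hB,
      ← lintegral_add_left_eq_self (B.indicator fun h => w (x + h)) (-x)]
    simp [Set.indicator]
  have h_meas : Measurable (Function.uncurry fun x y =>
      {x | -x + y ∈ B}.indicator (fun _ => w y) x) := by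
    have h_set : MeasurableSet {z : G × G | -z.1 + z.2 ∈ B} :=
      hB.preimage (f := fun z : G × G => -z.1 + z.2) (by fun_prop)
    exact (hw.comp measurable_snd).indicator h_set
  calc ∫⁻ h in B, ∫⁻ x, w (x + h) ∂ν ∂μ
      = ∫⁻ x, ∫⁻ h in B, w (x + h) ∂μ ∂ν := lintegral_lintegral_swap (by fun_prop)
    _ = ∫⁻ y, ∫⁻ x, {x | -x + y ∈ B}.indicator (fun _ => w y) x ∂ν ∂μ := by
        simp only [h_window]
        exact lintegral_lintegral_swap h_meas.aemeasurable
    _ = ∫⁻ y, w y * ν {x | -x + y ∈ B} ∂μ := by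
        refine lintegral_congr fun y => lintegral_indicator_const ?_ (w y)
        exact hB.preimage (f := fun x => -x + y) (by fun_prop)
    _ ≤ ∫⁻ y, κ * w y ∂μ := by
        refine lintegral_mono fun y => ?_
        rw [mul_comm]
        gcongr
        exact hκ y
    _ = κ * ∫⁻ y, w y ∂μ := lintegral_const_mul κ hw

theorem tendsto_zero_of_forall_le_add {ι : Type*} {l : Filter ι} {a : ι → ℝ≥0∞}
    {b : ℝ → ι → ℝ≥0∞} {c : ℝ → ℝ≥0∞} (hb : ∀ r > 0, Tendsto (b r) l (𝓝 0))
    (hc : Tendsto c (𝓝[>] 0) (𝓝 0)) (h_le : ∀ r > 0, ∀ i, a i ≤ b r i + c r) :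
    Tendsto a l (𝓝 0) := by
  rw [ENNReal.tendsto_nhds_zero] at hc ⊢
  intro ε hε
  have hε_half : 0 < ε / 2 := ENNReal.half_pos hε.ne'
  obtain ⟨r, hc_le, hr⟩ := ((hc _ hε_half).and self_mem_nhdsWithin).exists
  filter_upwards [ENNReal.tendsto_nhds_zero.mp (hb r hr) _ hε_half] with i hb_le
  calc a i ≤ b r i + c r := h_le r hr i
    _ ≤ ε / 2 + ε / 2 := add_le_add hb_le hc_le
    _ = ε := ENNReal.add_halves ε

theorem le_mul_add_pow_six_div {d e g q ε : ℝ} (hε : 0 < ε) (he : 0 ≤ e) (hq : 0 ≤ q)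
    (h_d : d ^ 2 ≤ q * g) (h_quad : g ≤ e ^ 2) (h_cubic : g ^ 2 ≤ e ^ 3) :
    d ≤ ε * e + q ^ 6 / ε ^ 11 := by
  by_contra! hd
  have h_tail : 0 ≤ q ^ 6 / ε ^ 11 := by positivity
  have h_large : ε * e < d := by linarith
  have hd_pos : 0 < d := (by positivity : 0 ≤ ε * e).trans_lt h_large
  have h_sq : ε ^ 2 < q := by
    by_contra! hq_small
    have : d ^ 2 ≤ (ε * e) ^ 2 := by
      rw [mul_pow]
      calc d ^ 2 ≤ q * g := h_d
        _ ≤ q * e ^ 2 := by gcongr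
        _ ≤ ε ^ 2 * e ^ 2 := by gcongr
    exact absurd (abs_le_of_sq_le_sq' this (by positivity)).2 h_large.not_ge
  have h_cube : ε ^ 3 * d ≤ q ^ 2 := by
    have : (ε ^ 3 * d) * d ^ 3 ≤ q ^ 2 * d ^ 3 :=
      calc (ε ^ 3 * d) * d ^ 3 = ε ^ 3 * d ^ 4 := by ring
        _ = ε ^ 3 * (d ^ 2) ^ 2 := by ring
        _ ≤ ε ^ 3 * (q * g) ^ 2 := by gcongr
        _ = ε ^ 3 * (q ^ 2 * g ^ 2) := by ring
        _ ≤ ε ^ 3 * (q ^ 2 * e ^ 3) := by gcongr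
        _ = q ^ 2 * (ε * e) ^ 3 := by ring
        _ ≤ q ^ 2 * d ^ 3 := by gcongr
    exact le_of_mul_le_mul_right this (by positivity)
  have h_final : d ≤ q ^ 6 / ε ^ 11 := by
    rw [le_div_iff₀ (by positivity)]
    calc d * ε ^ 11 = ε ^ 3 * d * (ε ^ 2) ^ 4 := by ring
      _ ≤ q ^ 2 * q ^ 4 := by gcongr
      _ = q ^ 6 := by ring
  linarith [(by positivity : 0 ≤ ε * e)]

section Algebra

theorem nsq_nonneg (u : R4) : 0 ≤ nsq u :=
  show 0 ≤ ∑ a, u a * u a from Finset.sum_nonneg fun a _ => mul_self_nonneg (u a)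

theorem ofReal_nsq (u : R4) : ENNReal.ofReal (nsq u) = ∑ a, ‖u a‖ₑ ^ 2 := by
  have h_sq (a : Fin 4) : ‖u a‖ₑ ^ 2 = ENNReal.ofReal (u a * u a) := by
    rw [enorm_eq_ofReal_abs, ← ENNReal.ofReal_pow (abs_nonneg _), sq_abs, sq]
  simp only [h_sq, nsq, dot]
  exact ENNReal.ofReal_sum_of_nonneg fun a _ => mul_self_nonneg (u a)

theorem dot_sq_le (u v : R4) : dot u v ^ 2 ≤ nsq u * nsq v := by
  simpa only [nsq, dot, ← sq] using Finset.sum_mul_sq_le_sq_mul_sq Finset.univ u v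

theorem wedgeSq_nonneg (u v : R4) : 0 ≤ wedgeSq u v :=
  sub_nonneg.mpr (dot_sq_le u v)

/-- The generalized cross product of three vectors of ℝ⁴, given by the signed 3×3 minors of the
4×3 matrix with columns `b`, `c`, `d`; it turns `det4` into an inner product. -/
def cross (b c d : R4) : R4 :=
  fun i => (-1) ^ (i : ℕ) * Matrix.det (Matrix.of fun j k : Fin 3 => ![b, c, d] k (i.succAbove j))

theorem det4_eq_dot_cross (a b c d : R4) : det4 a b c d = dot a (cross b c d) := by
  rw [det4, Matrix.det_succ_column_zero]
  refine Finset.sum_congr rfl fun i _ => ?_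
  rw [mul_comm _ (Matrix.of _ i 0), mul_assoc]
  rfl

theorem nsq_cross (b c d : R4) : nsq (cross b c d) = gram b c d := by
  simp only [nsq, gram, cross, dot, Matrix.det_fin_three, Fin.sum_univ_four, Matrix.of_apply,
    Matrix.cons_val, Fin.succAbove, Fin.reduceCastSucc, Fin.reduceSucc, Fin.reduceLT, ↓reduceIte,
    Fin.coe_ofNat_eq_mod, Nat.reduceMod]
  ring

theorem det4_sq_le (a b c d : R4) : det4 a b c d ^ 2 ≤ nsq a * gram b c d := by
  rw [det4_eq_dot_cross, ← nsq_cross]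
  exact dot_sq_le a (cross b c d)

theorem gram_nonneg (b c d : R4) : 0 ≤ gram b c d :=
  nsq_cross b c d ▸ nsq_nonneg _

theorem gram_eq_sub_nsq (b c d : R4) :
    gram b c d = nsq b * wedgeSq c d - nsq (dot b d • c - dot b c • d) := by
  simp only [gram, Matrix.det_fin_three, wedgeSq, nsq, dot, Fin.sum_univ_four, Matrix.of_apply,
    Matrix.cons_val, Pi.sub_apply, Pi.smul_apply, smul_eq_mul]
  ring

theorem gram_le_nsq_mul_wedgeSq (b c d : R4) : gram b c d ≤ nsq b * wedgeSq c d := by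
  rw [gram_eq_sub_nsq]
  exact sub_le_self _ (nsq_nonneg _)

theorem nsq_mul_gram_eq_sub_sq (b c d : R4) :
    nsq b * gram b c d =
      wedgeSq b c * wedgeSq b d - (nsq b * dot c d - dot b c * dot b d) ^ 2 := by
  simp only [gram, Matrix.det_fin_three, wedgeSq, nsq, dot, Fin.sum_univ_four, Matrix.of_apply,
    Matrix.cons_val]
  ring

theorem gram_sq_le (b c d : R4) :
    gram b c d ^ 2 ≤ wedgeSq b c * wedgeSq b d * wedgeSq c d :=
  calc gram b c d ^ 2 ≤ gram b c d * (nsq b * wedgeSq c d) := by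
        rw [sq]
        gcongr
        exacts [gram_nonneg b c d, gram_le_nsq_mul_wedgeSq b c d]
    _ = (nsq b * gram b c d) * wedgeSq c d := by ring
    _ ≤ wedgeSq b c * wedgeSq b d * wedgeSq c d := by
        rw [nsq_mul_gram_eq_sub_sq]
        gcongr
        exacts [wedgeSq_nonneg c d, sub_le_self _ (sq_nonneg _)]

theorem nsq_neg (u : R4) : nsq (-u) = nsq u := by
  simp [nsq, dot]

theorem nsq_sub_comm (u v : R4) : nsq (u - v) = nsq (v - u) := by
  rw [← nsq_neg, neg_sub]

theorem nsq_add_le (u v : R4) : nsq (u + v) ≤ 2 * nsq u + 2 * nsq v := by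
  have h := nsq_nonneg (u - v)
  simp only [nsq, dot, Fin.sum_univ_four, Pi.add_apply, Pi.sub_apply] at h ⊢
  linarith

theorem nsq_sum_smul_le {ι : Type*} (s : Finset ι) (c : ι → ℝ) (w : ι → R4) :
    nsq (∑ i ∈ s, c i • w i) ≤ (∑ i ∈ s, c i ^ 2) * ∑ i ∈ s, nsq (w i) := by
  calc nsq (∑ i ∈ s, c i • w i) = ∑ a, (∑ i ∈ s, c i * w i a) ^ 2 := by
        simp [nsq, dot, sq]
    _ ≤ ∑ a, (∑ i ∈ s, c i ^ 2) * ∑ i ∈ s, w i a ^ 2 :=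
        Finset.sum_le_sum fun a _ => Finset.sum_mul_sq_le_sq_mul_sq s c fun i => w i a
    _ = (∑ i ∈ s, c i ^ 2) * ∑ i ∈ s, nsq (w i) := by
        rw [← Finset.mul_sum, Finset.sum_comm]
        simp only [nsq, dot, sq]

theorem nsq_sub_le_four {u v : R4} (hu : nsq u = 1) (hv : nsq v = 1) : nsq (u - v) ≤ 4 := by
  calc nsq (u - v) = nsq (u + -v) := by rw [sub_eq_add_neg]
    _ ≤ 2 * nsq u + 2 * nsq (-v) := nsq_add_le u (-v)
    _ = 4 := by rw [nsq_neg, hu, hv]; norm_num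

theorem nsq_sub_pow_three_le {u v : R4} (hu : nsq u = 1) (hv : nsq v = 1) (p : R4) :
    nsq (u - p) ^ 3 ≤ 32 * nsq (v - p) ^ 3 + 512 * nsq (v - u) := by
  have h_nonneg := nsq_nonneg
  have h_triangle : nsq (u - p) ≤ 2 * nsq (v - p) + 2 * nsq (v - u) := by
    have h := nsq_add_le (v - p) (u - v)
    rwa [nsq_sub_comm u v, add_comm, sub_add_sub_cancel] at h
  calc nsq (u - p) ^ 3 ≤ (2 * nsq (v - p) + 2 * nsq (v - u)) ^ 3 := by
        gcongr
        exact h_nonneg _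
    _ ≤ 2 ^ 2 * ((2 * nsq (v - p)) ^ 3 + (2 * nsq (v - u)) ^ 3) :=
        add_pow_le (by linarith [h_nonneg (v - p)]) (by linarith [h_nonneg (v - u)]) 3
    _ = 32 * nsq (v - p) ^ 3 + 32 * (nsq (v - u) ^ 2 * nsq (v - u)) := by ring
    _ ≤ 32 * nsq (v - p) ^ 3 + 32 * (4 ^ 2 * nsq (v - u)) := by
        gcongr
        exacts [h_nonneg _, h_nonneg _, nsq_sub_le_four hv hu]
    _ = 32 * nsq (v - p) ^ 3 + 512 * nsq (v - u) := by ring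

theorem nsq_sub_pow_six_le {u v p : R4} (hu : nsq u = 1) (hv : nsq v = 1) (hp : nsq p = 1) :
    nsq (u - p) ^ 6 ≤ 32 * (nsq (u - p) ^ 3 * nsq (v - p) ^ 3) + 32768 * nsq (v - u) := by
  have h_nonneg := nsq_nonneg
  calc nsq (u - p) ^ 6 = nsq (u - p) ^ 3 * nsq (u - p) ^ 3 := by ring
    _ ≤ nsq (u - p) ^ 3 * (32 * nsq (v - p) ^ 3 + 512 * nsq (v - u)) := by
        gcongr
        exacts [pow_nonneg (h_nonneg _) 3, nsq_sub_pow_three_le hu hv p]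
    _ = 32 * (nsq (u - p) ^ 3 * nsq (v - p) ^ 3) + 512 * (nsq (u - p) ^ 3 * nsq (v - u)) := by
        ring
    _ ≤ 32 * (nsq (u - p) ^ 3 * nsq (v - p) ^ 3) + 512 * (4 ^ 3 * nsq (v - u)) := by
        gcongr
        exacts [h_nonneg _, h_nonneg _, nsq_sub_le_four hu hp]
    _ = 32 * (nsq (u - p) ^ 3 * nsq (v - p) ^ 3) + 32768 * nsq (v - u) := by ring

theorem nsq_northPole : nsq northPole = 1 := by
  simp [nsq, dot, northPole, Fin.sum_univ_four]

end Algebra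

section Eball

theorem isOpen_eball (y : R3) (ρ : ℝ) : IsOpen (eball y ρ) :=
  isOpen_lt (by fun_prop) continuous_const

theorem mem_eball_self (y : R3) {ρ : ℝ} (hρ : 0 < ρ) : y ∈ eball y ρ := by
  simpa [eball] using pow_pos hρ 2

theorem neg_add_mem_eball_zero_iff {x y : R3} {ρ : ℝ} : -x + y ∈ eball 0 ρ ↔ x ∈ eball y ρ := by
  simp [eball, neg_add_eq_sub, sub_sq_comm]

theorem eball_subset_ball (y : R3) {ρ : ℝ} (hρ : 0 < ρ) : eball y ρ ⊆ Metric.ball y ρ := by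
  intro x hx
  rw [Metric.mem_ball, dist_pi_lt_iff hρ]
  intro i
  refine abs_lt_of_sq_lt_sq (lt_of_le_of_lt ?_ hx) hρ.le
  exact Finset.single_le_sum (f := fun i => (x i - y i) ^ 2) (fun i _ => sq_nonneg _)
    (Finset.mem_univ i)

theorem volume_eball_ne_zero (y : R3) {ρ : ℝ} (hρ : 0 < ρ) : volume (eball y ρ) ≠ 0 :=
  ((isOpen_eball y ρ).measure_pos volume ⟨y, mem_eball_self y hρ⟩).ne'

theorem volume_eball_ne_top (y : R3) {ρ : ℝ} (hρ : 0 < ρ) : volume (eball y ρ) ≠ ∞ :=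
  measure_ne_top_of_subset (eball_subset_ball y hρ) measure_ball_lt_top.ne

end Eball

namespace SkyrmeMap

variable (φ : SkyrmeMap)

/-- The squared distance `|φ(x) - P|²` of the value of a Skyrme map to the north pole. Working with
the square keeps `|φ - P|⁶` and `|φ - P|¹²` polynomial, as its third and sixth powers. -/
def poleDistSq (x : R3) : ℝ := nsq (φ.toFun x - northPole)

/-- The density `f = |∇φ|² + |A(φ)|² + |φ - P|⁶` of the vanishing lemma. -/
def density (x : R3) : ℝ := energyDensity φ x + φ.poleDistSq x ^ 3

theorem poleDistSq_nonneg (x : R3) : 0 ≤ φ.poleDistSq x := nsq_nonneg _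

theorem gradSq_nonneg (x : R3) : 0 ≤ gradSq φ x := Finset.sum_nonneg fun _ _ => nsq_nonneg _

theorem ASq_nonneg (x : R3) : 0 ≤ ASq φ x :=
  Finset.sum_nonneg fun _ _ => Finset.sum_nonneg fun _ _ => wedgeSq_nonneg _ _

theorem energyDensity_nonneg (x : R3) : 0 ≤ energyDensity φ x :=
  add_nonneg (φ.gradSq_nonneg x) (φ.ASq_nonneg x)

theorem density_nonneg (x : R3) : 0 ≤ φ.density x :=
  add_nonneg (φ.energyDensity_nonneg x) (pow_nonneg (φ.poleDistSq_nonneg x) 3)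

theorem nsq_pderiv_le_gradSq (i : Fin 3) (x : R3) : nsq (φ.pderiv i x) ≤ gradSq φ x :=
  Finset.single_le_sum (f := fun i => nsq (φ.pderiv i x)) (fun _ _ => nsq_nonneg _)
    (Finset.mem_univ i)

theorem wedgeSq_pderiv_le_ASq (i j : Fin 3) (x : R3) :
    wedgeSq (φ.pderiv i x) (φ.pderiv j x) ≤ ASq φ x :=
  (Finset.single_le_sum (f := fun j => wedgeSq (φ.pderiv i x) (φ.pderiv j x))
    (fun _ _ => wedgeSq_nonneg _ _) (Finset.mem_univ j)).trans
  (Finset.single_le_sum (f := fun i => ∑ j, wedgeSq (φ.pderiv i x) (φ.pderiv j x))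
    (fun _ _ => Finset.sum_nonneg fun _ _ => wedgeSq_nonneg _ _) (Finset.mem_univ i))

theorem gram_pderiv_le_sq (x : R3) :
    gram (φ.pderiv 0 x) (φ.pderiv 1 x) (φ.pderiv 2 x) ≤ energyDensity φ x ^ 2 :=
  calc gram (φ.pderiv 0 x) (φ.pderiv 1 x) (φ.pderiv 2 x)
      ≤ nsq (φ.pderiv 0 x) * wedgeSq (φ.pderiv 1 x) (φ.pderiv 2 x) := gram_le_nsq_mul_wedgeSq _ _ _
    _ ≤ gradSq φ x * ASq φ x :=
        mul_le_mul (φ.nsq_pderiv_le_gradSq 0 x) (φ.wedgeSq_pderiv_le_ASq 1 2 x)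
          (wedgeSq_nonneg _ _) (φ.gradSq_nonneg x)
    _ ≤ energyDensity φ x ^ 2 := by
        rw [energyDensity]
        nlinarith [φ.gradSq_nonneg x, φ.ASq_nonneg x]

theorem gram_pderiv_sq_le_pow_three (x : R3) :
    gram (φ.pderiv 0 x) (φ.pderiv 1 x) (φ.pderiv 2 x) ^ 2 ≤ energyDensity φ x ^ 3 := by
  have h_nonneg := wedgeSq_nonneg
  have h_ASq := φ.ASq_nonneg x
  calc gram (φ.pderiv 0 x) (φ.pderiv 1 x) (φ.pderiv 2 x) ^ 2
      ≤ wedgeSq (φ.pderiv 0 x) (φ.pderiv 1 x) * wedgeSq (φ.pderiv 0 x) (φ.pderiv 2 x) *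
          wedgeSq (φ.pderiv 1 x) (φ.pderiv 2 x) := gram_sq_le _ _ _
    _ ≤ ASq φ x * ASq φ x * ASq φ x := by
        gcongr
        exacts [h_nonneg _ _, h_nonneg _ _, φ.wedgeSq_pderiv_le_ASq 0 1 x,
          φ.wedgeSq_pderiv_le_ASq 0 2 x, φ.wedgeSq_pderiv_le_ASq 1 2 x]
    _ = ASq φ x ^ 3 := by ring
    _ ≤ energyDensity φ x ^ 3 := by
        gcongr
        exact le_add_of_nonneg_left (φ.gradSq_nonneg x)

theorem abs_det4_le {ε : ℝ} (hε : 0 < ε) (x : R3) :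
    |det4 (φ.toFun x - northPole) (φ.pderiv 0 x) (φ.pderiv 1 x) (φ.pderiv 2 x)| ≤
      ε * energyDensity φ x + φ.poleDistSq x ^ 6 / ε ^ 11 :=
  le_mul_add_pow_six_div hε (φ.energyDensity_nonneg x) (φ.poleDistSq_nonneg x)
    ((sq_abs _).trans_le (det4_sq_le _ _ _ _)) (φ.gram_pderiv_le_sq x)
    (φ.gram_pderiv_sq_le_pow_three x)

@[fun_prop]
theorem measurable_poleDistSq : Measurable φ.poleDistSq := by
  have h_toFun := φ.meas
  unfold poleDistSq nsq dot
  fun_prop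

theorem locallyIntegrable_apply (a : Fin 4) : LocallyIntegrable fun x => φ.toFun x a := by
  have h_bound : ∀ᵐ x, ‖φ.toFun x a‖ ≤ 1 := by
    filter_upwards [φ.sphere] with x hx
    rw [← sq_le_one_iff₀ (norm_nonneg _), norm_eq_abs, sq_abs, ← hx, sq]
    exact Finset.single_le_sum (f := fun a => φ.toFun x a * φ.toFun x a)
      (fun a _ => mul_self_nonneg _) (Finset.mem_univ a)
  have h_meas : Measurable fun x => φ.toFun x a := (measurable_pi_apply a).comp φ.meas
  exact (memLp_top_of_bound h_meas.aestronglyMeasurable 1 h_bound).locallyIntegrable le_top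

theorem locallyIntegrable_pderiv_apply (i : Fin 3) (a : Fin 4) :
    LocallyIntegrable fun x => φ.pderiv i x a := by
  intro x
  obtain ⟨s, hs, h_int⟩ := φ.pderiv_locInt i x
  exact ⟨s, hs, h_int.eval a⟩

theorem locallyIntegrable_sum_smul_pderiv_apply (h : R3) (a : Fin 4) :
    LocallyIntegrable fun x => (∑ i, h i • φ.pderiv i x) a := by
  simp only [Finset.sum_apply, Pi.smul_apply]
  exact locallyIntegrable_finsetSum _ fun i _ => (φ.locallyIntegrable_pderiv_apply i a).smul (h i)

theorem hasWeakLineDeriv_apply (a : Fin 4) (h : R3) :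
    HasWeakLineDeriv volume (fun x => φ.toFun x a) (fun x => (∑ i, h i • φ.pderiv i x) a) h := by
  have h_partial (i : Fin 3) : HasWeakLineDeriv volume (fun x => φ.toFun x a)
      (fun x => φ.pderiv i x a) (Pi.single i 1) :=
    fun ψ hψ hψ_supp => φ.weak i a ψ ⟨hψ, hψ_supp⟩
  have h_sum := HasWeakLineDeriv.sum_smul (s := Finset.univ) (fun i _ => h_partial i)
    (fun i _ => φ.locallyIntegrable_pderiv_apply i a) (φ.locallyIntegrable_apply a) h
  rw [← pi_eq_sum_univ' h] at h_sum
  simpa using h_sum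

theorem lintegral_nsq_translate_sub_le (h : R3) :
    ∫⁻ x, ENNReal.ofReal (nsq (φ.toFun (x + h) - φ.toFun x)) ≤
      ENNReal.ofReal (∑ i, h i ^ 2) * ∫⁻ x, ENNReal.ofReal (gradSq φ x) := by
  calc ∫⁻ x, ENNReal.ofReal (nsq (φ.toFun (x + h) - φ.toFun x))
      = ∑ a, ∫⁻ x, ‖φ.toFun (x + h) a - φ.toFun x a‖ₑ ^ 2 := by
        have h_toFun := φ.meas
        simp only [ofReal_nsq, Pi.sub_apply]
        exact lintegral_finsetSum _ fun a _ => by fun_prop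
    _ ≤ ∑ a, ∫⁻ x, ‖(∑ i, h i • φ.pderiv i x) a‖ₑ ^ 2 :=
        Finset.sum_le_sum fun a _ =>
          (φ.hasWeakLineDeriv_apply a h).lintegral_enorm_sq_translate_sub_le
            (φ.locallyIntegrable_apply a) (φ.locallyIntegrable_sum_smul_pderiv_apply h a)
    _ = ∫⁻ x, ENNReal.ofReal (nsq (∑ i, h i • φ.pderiv i x)) := by
        simp only [ofReal_nsq]
        refine (lintegral_finsetSum' _ fun a _ => ?_).symm
        exact (φ.locallyIntegrable_sum_smul_pderiv_apply h a).aestronglyMeasurable.enorm.pow_const 2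
    _ ≤ ∫⁻ x, ENNReal.ofReal (∑ i, h i ^ 2) * ENNReal.ofReal (gradSq φ x) := by
        refine lintegral_mono fun x => ?_
        rw [← ENNReal.ofReal_mul (by positivity)]
        exact ENNReal.ofReal_le_ofReal (nsq_sum_smul_le Finset.univ h fun i => φ.pderiv i x)
    _ = ENNReal.ofReal (∑ i, h i ^ 2) * ∫⁻ x, ENNReal.ofReal (gradSq φ x) :=
        lintegral_const_mul' _ _ ENNReal.ofReal_ne_top

theorem ae_poleDistSq_pow_six_le (h : R3) : ∀ᵐ x, φ.poleDistSq x ^ 6 ≤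
    32 * (φ.poleDistSq x ^ 3 * φ.poleDistSq (x + h) ^ 3) +
      32768 * nsq (φ.toFun (x + h) - φ.toFun x) := by
  have h_sphere : ∀ᵐ x, nsq (φ.toFun (x + h)) = 1 :=
    (measurePreserving_add_right volume h).quasiMeasurePreserving.ae φ.sphere
  filter_upwards [φ.sphere, h_sphere] with x hx hxh
  exact nsq_sub_pow_six_le hx hxh nsq_northPole

/-- The correlation over `D` of `|φ - P|⁶` with its translate by `h`; averaged over small `h` it
compares `∫_D |φ - P|¹²` with the local masses of `|φ - P|⁶`. -/
def poleCorrelation (D : Set R3) (h : R3) : ℝ≥0∞ :=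
  ∫⁻ x in D, ENNReal.ofReal (φ.poleDistSq x ^ 3) * ENNReal.ofReal (φ.poleDistSq (x + h) ^ 3)

theorem setLIntegral_poleDistSq_pow_six_le_poleCorrelation (D : Set R3) (h : R3) :
    ∫⁻ x in D, ENNReal.ofReal (φ.poleDistSq x ^ 6) ≤
      32 * φ.poleCorrelation D h +
        32768 * (ENNReal.ofReal (∑ i, h i ^ 2) * ∫⁻ x, ENNReal.ofReal (gradSq φ x)) := by
  calc ∫⁻ x in D, ENNReal.ofReal (φ.poleDistSq x ^ 6)
      ≤ ∫⁻ x in D, (32 * (ENNReal.ofReal (φ.poleDistSq x ^ 3) *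
            ENNReal.ofReal (φ.poleDistSq (x + h) ^ 3)) +
          32768 * ENNReal.ofReal (nsq (φ.toFun (x + h) - φ.toFun x))) := by
        refine lintegral_mono_ae (ae_restrict_of_ae ?_)
        filter_upwards [φ.ae_poleDistSq_pow_six_le h] with x hx
        refine (ENNReal.ofReal_le_ofReal hx).trans (ENNReal.ofReal_add_le.trans_eq ?_)
        rw [ENNReal.ofReal_mul (p := 32) (by norm_num),
          ENNReal.ofReal_mul (pow_nonneg (φ.poleDistSq_nonneg x) 3),
          ENNReal.ofReal_mul (p := 32768) (by norm_num), ENNReal.ofReal_ofNat,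
          ENNReal.ofReal_ofNat]
    _ = 32 * φ.poleCorrelation D h +
          32768 * ∫⁻ x in D, ENNReal.ofReal (nsq (φ.toFun (x + h) - φ.toFun x)) := by
        rw [lintegral_add_left (by fun_prop), lintegral_const_mul' _ _ (by norm_num),
          lintegral_const_mul' _ _ (by norm_num), poleCorrelation]
    _ ≤ _ := by
        gcongr
        exact (setLIntegral_le_lintegral _ _).trans (φ.lintegral_nsq_translate_sub_le h)

theorem setLIntegral_eball_poleCorrelation_le {D : Set R3} {ρ : ℝ} {κ : ℝ≥0∞}
    (hκ : ∀ y, ∫⁻ x in eball y ρ ∩ D, ENNReal.ofReal (φ.poleDistSq x ^ 3) ≤ κ) :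
    ∫⁻ h in eball 0 ρ, φ.poleCorrelation D h ≤
      κ * ∫⁻ x, ENNReal.ofReal (φ.poleDistSq x ^ 3) := by
  set w : R3 → ℝ≥0∞ := fun x => ENNReal.ofReal (φ.poleDistSq x ^ 3)
  have hw : Measurable w := by fun_prop
  have h_window (y : R3) :
      (volume.restrict D).withDensity w {x | -x + y ∈ eball 0 ρ} ≤ κ := by
    have h_meas : MeasurableSet (eball y ρ) := (isOpen_eball y ρ).measurableSet
    simp only [neg_add_mem_eball_zero_iff, Set.ofPred_mem_eq]
    rw [withDensity_apply _ h_meas, Measure.restrict_restrict h_meas]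
    exact hκ y
  calc ∫⁻ h in eball 0 ρ, φ.poleCorrelation D h
      = ∫⁻ h in eball 0 ρ, ∫⁻ x, w (x + h) ∂(volume.restrict D).withDensity w :=
        lintegral_congr fun h =>
          (lintegral_withDensity_eq_lintegral_mul _ hw (by fun_prop)).symm
    _ ≤ κ * ∫⁻ x, w x :=
        setLIntegral_lintegral_translate_le (isOpen_eball 0 ρ).measurableSet h_window hw

theorem setLIntegral_poleDistSq_pow_six_le {D : Set R3} {ρ : ℝ} (hρ : 0 < ρ) {κ : ℝ≥0∞}
    (hκ : ∀ y, ∫⁻ x in eball y ρ ∩ D, ENNReal.ofReal (φ.poleDistSq x ^ 3) ≤ κ) :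
    ∫⁻ x in D, ENNReal.ofReal (φ.poleDistSq x ^ 6) ≤
      32 * (κ * ∫⁻ x, ENNReal.ofReal (φ.poleDistSq x ^ 3)) / volume (eball 0 ρ) +
        32768 * (ENNReal.ofReal (ρ ^ 2) * ∫⁻ x, ENNReal.ofReal (gradSq φ x)) := by
  set V := volume (eball 0 ρ)
  set error := 32768 * (ENNReal.ofReal (ρ ^ 2) * ∫⁻ x, ENNReal.ofReal (gradSq φ x))
  have hV : V ≠ 0 := volume_eball_ne_zero 0 hρ
  have hV_top : V ≠ ∞ := volume_eball_ne_top 0 hρ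
  have h_translate (h : R3) (hh : h ∈ eball 0 ρ) :
      ∫⁻ x in D, ENNReal.ofReal (φ.poleDistSq x ^ 6) ≤ 32 * φ.poleCorrelation D h + error := by
    refine (φ.setLIntegral_poleDistSq_pow_six_le_poleCorrelation D h).trans ?_
    have h_radius : ∑ i, h i ^ 2 < ρ ^ 2 := by simpa [eball] using hh
    unfold error
    gcongr
  rw [← ENNReal.mul_le_mul_iff_right hV hV_top]
  calc V * ∫⁻ x in D, ENNReal.ofReal (φ.poleDistSq x ^ 6)
      = ∫⁻ _ in eball 0 ρ, ∫⁻ x in D, ENNReal.ofReal (φ.poleDistSq x ^ 6) := by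
        rw [setLIntegral_const, mul_comm]
    _ ≤ ∫⁻ h in eball 0 ρ, (32 * φ.poleCorrelation D h + error) :=
        setLIntegral_mono' (isOpen_eball 0 ρ).measurableSet h_translate
    _ = 32 * (∫⁻ h in eball 0 ρ, φ.poleCorrelation D h) + V * error := by
        rw [lintegral_add_right _ measurable_const, lintegral_const_mul' _ _ (by norm_num),
          setLIntegral_const, mul_comm V]
    _ ≤ 32 * (κ * ∫⁻ x, ENNReal.ofReal (φ.poleDistSq x ^ 3)) + V * error := by
        gcongr
        exact φ.setLIntegral_eball_poleCorrelation_le hκ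
    _ = V * (32 * (κ * ∫⁻ x, ENNReal.ofReal (φ.poleDistSq x ^ 3)) / V + error) := by
        rw [mul_add, ENNReal.mul_div_cancel hV hV_top]

theorem enorm_setIntegral_det4_le {ε : ℝ} (hε : 0 < ε) (D : Set R3) :
    ‖∫ x in D, det4 (φ.toFun x - northPole) (φ.pderiv 0 x) (φ.pderiv 1 x) (φ.pderiv 2 x)‖ₑ ≤
      (∫⁻ x in D, ENNReal.ofReal (φ.poleDistSq x ^ 6)) / ENNReal.ofReal (ε ^ 11) +
        ENNReal.ofReal ε * ∫⁻ x, ENNReal.ofReal (energyDensity φ x) := by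
  have h_pow : (ENNReal.ofReal (ε ^ 11))⁻¹ ≠ ∞ := by simp [hε]
  calc ‖∫ x in D, det4 (φ.toFun x - northPole) (φ.pderiv 0 x) (φ.pderiv 1 x) (φ.pderiv 2 x)‖ₑ
      ≤ ∫⁻ x in D, (ENNReal.ofReal (φ.poleDistSq x ^ 6) * (ENNReal.ofReal (ε ^ 11))⁻¹ +
          ENNReal.ofReal ε * ENNReal.ofReal (energyDensity φ x)) := by
        refine (enorm_integral_le_lintegral_enorm _).trans (lintegral_mono fun x => ?_)
        rw [enorm_eq_ofReal_abs, ← div_eq_mul_inv, ← ENNReal.ofReal_div_of_pos (by positivity),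
          ← ENNReal.ofReal_mul hε.le, add_comm]
        exact (ENNReal.ofReal_le_ofReal (φ.abs_det4_le hε x)).trans ENNReal.ofReal_add_le
    _ = (∫⁻ x in D, ENNReal.ofReal (φ.poleDistSq x ^ 6)) / ENNReal.ofReal (ε ^ 11) +
          ENNReal.ofReal ε * ∫⁻ x in D, ENNReal.ofReal (energyDensity φ x) := by
        rw [lintegral_add_left (by fun_prop), lintegral_mul_const' _ _ h_pow,
          lintegral_const_mul' _ _ ENNReal.ofReal_ne_top, div_eq_mul_inv]
    _ ≤ _ := by
        gcongr
        exact Measure.restrict_le_self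

theorem gradSq_le_density (x : R3) : gradSq φ x ≤ φ.density x :=
  (le_add_of_nonneg_right (φ.ASq_nonneg x)).trans
    (le_add_of_nonneg_right (pow_nonneg (φ.poleDistSq_nonneg x) 3))

theorem energyDensity_le_density (x : R3) : energyDensity φ x ≤ φ.density x :=
  le_add_of_nonneg_right (pow_nonneg (φ.poleDistSq_nonneg x) 3)

theorem poleDistSq_pow_three_le_density (x : R3) : φ.poleDistSq x ^ 3 ≤ φ.density x :=
  le_add_of_nonneg_left (φ.energyDensity_nonneg x)

variable {φ}

theorem setLIntegral_ofReal_le_of_le_density {u : R3 → ℝ} (h_le : ∀ x, u x ≤ φ.density x)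
    (h_int : Integrable φ.density) (s : Set R3) :
    ∫⁻ x in s, ENNReal.ofReal (u x) ≤ ENNReal.ofReal (∫ x in s, φ.density x) := by
  rw [ofReal_integral_eq_lintegral_ofReal h_int.integrableOn (ae_of_all _ φ.density_nonneg)]
  exact lintegral_mono fun x => ENNReal.ofReal_le_ofReal (h_le x)

theorem lintegral_ofReal_le_of_le_density {u : R3 → ℝ} (h_le : ∀ x, u x ≤ φ.density x)
    (h_int : Integrable φ.density) {M : ℝ} (hM : ∫ x, φ.density x ≤ M) :
    ∫⁻ x, ENNReal.ofReal (u x) ≤ ENNReal.ofReal M := by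
  rw [← setLIntegral_univ]
  refine (setLIntegral_ofReal_le_of_le_density h_le h_int Set.univ).trans ?_
  refine ENNReal.ofReal_le_ofReal ?_
  rwa [setIntegral_univ]

theorem setIntegral_density_le_iSup (h_int : Integrable φ.density) (D : Set R3) (ρ : ℝ)
    (y : R3) :
    ∫ x in eball y ρ ∩ D, φ.density x ≤ ⨆ z, ∫ x in eball z ρ ∩ D, φ.density x := by
  refine le_ciSup (f := fun z => ∫ x in eball z ρ ∩ D, φ.density x) ⟨∫ x, φ.density x, ?_⟩ y
  rintro _ ⟨z, rfl⟩
  exact setIntegral_le_integral h_int (ae_of_all _ φ.density_nonneg)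

theorem tendsto_setLIntegral_poleDistSq_pow_six {ι : Type*} {l : Filter ι} {φ : ι → SkyrmeMap}
    {D : ι → Set R3} (h_int : ∀ n, Integrable (φ n).density) {M : ℝ}
    (hM : ∀ n, ∫ x, (φ n).density x ≤ M)
    (h_van : ∀ ρ > 0, Tendsto (fun n => ⨆ y, ∫ x in eball y ρ ∩ D n, (φ n).density x) l (𝓝 0)) :
    Tendsto (fun n => ∫⁻ x in D n, ENNReal.ofReal ((φ n).poleDistSq x ^ 6)) l (𝓝 0) := by
  set κ : ℝ → ι → ℝ≥0∞ := fun ρ n =>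
    ENNReal.ofReal (⨆ y, ∫ x in eball y ρ ∩ D n, (φ n).density x)
  have hκ (ρ : ℝ) (n : ι) (y : R3) :
      ∫⁻ x in eball y ρ ∩ D n, ENNReal.ofReal ((φ n).poleDistSq x ^ 3) ≤ κ ρ n :=
    (setLIntegral_ofReal_le_of_le_density (φ n).poleDistSq_pow_three_le_density
      (h_int n) _).trans
      (ENNReal.ofReal_le_ofReal (setIntegral_density_le_iSup (h_int n) (D n) ρ y))
  refine tendsto_zero_of_forall_le_add
    (b := fun ρ n => 32 * (κ ρ n * ENNReal.ofReal M) / volume (eball 0 ρ))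
    (c := fun ρ => 32768 * (ENNReal.ofReal (ρ ^ 2) * ENNReal.ofReal M)) ?_ ?_ ?_
  · intro ρ hρ
    have hκ_lim : Tendsto (κ ρ) l (𝓝 0) := by
      simpa using ENNReal.tendsto_ofReal (h_van ρ hρ)
    have h_cont : Continuous fun t : ℝ≥0∞ =>
        32 * (t * ENNReal.ofReal M) / volume (eball 0 ρ) :=
      (ENNReal.continuous_div_const _ (volume_eball_ne_zero 0 hρ)).comp
        ((ENNReal.continuous_const_mul (by norm_num)).comp
          (ENNReal.continuous_mul_const ENNReal.ofReal_ne_top))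
    simpa [Function.comp_def] using (h_cont.tendsto 0).comp hκ_lim
  · have h_cont : Continuous fun ρ : ℝ =>
        32768 * (ENNReal.ofReal (ρ ^ 2) * ENNReal.ofReal M) :=
      (ENNReal.continuous_const_mul (by norm_num)).comp
        ((ENNReal.continuous_mul_const ENNReal.ofReal_ne_top).comp
          (ENNReal.continuous_ofReal.comp (continuous_pow 2)))
    simpa using (h_cont.tendsto 0).mono_left nhdsWithin_le_nhds
  · intro ρ hρ n
    refine ((φ n).setLIntegral_poleDistSq_pow_six_le hρ (hκ ρ n)).trans ?_
    gcongr
    exacts [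
      lintegral_ofReal_le_of_le_density (φ n).poleDistSq_pow_three_le_density (h_int n) (hM n),
      lintegral_ofReal_le_of_le_density (φ n).gradSq_le_density (h_int n) (hM n)]

end SkyrmeMap

theorem skyrme_vanishing_lemma_general {ι : Type*} {l : Filter ι} (φ : ι → SkyrmeMap)
    (D : ι → Set R3) (h_int : ∀ n, Integrable (φ n).density) (M : ℝ)
    (hM : ∀ n, ∫ x, (φ n).density x ≤ M)
    (h_van : ∀ R > 0, Tendsto (fun n => ⨆ y, ∫ x in eball y R ∩ D n, (φ n).density x) l (𝓝 0)) :
    Tendsto (fun n => ∫ x in D n, det4 ((φ n).toFun x - northPole)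
      ((φ n).pderiv 0 x) ((φ n).pderiv 1 x) ((φ n).pderiv 2 x)) l (𝓝 0) := by
  rw [tendsto_zero_iff_enorm_tendsto_zero]
  have h_pole := SkyrmeMap.tendsto_setLIntegral_poleDistSq_pow_six h_int hM h_van
  refine tendsto_zero_of_forall_le_add
    (b := fun ε n => (∫⁻ x in D n, ENNReal.ofReal ((φ n).poleDistSq x ^ 6)) /
      ENNReal.ofReal (ε ^ 11))
    (c := fun ε => ENNReal.ofReal ε * ENNReal.ofReal M) ?_ ?_ ?_
  · intro ε hε
    simpa using ENNReal.Tendsto.div_const h_pole (Or.inr (by positivity))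
  · have h_cont : Continuous fun ε : ℝ => ENNReal.ofReal ε * ENNReal.ofReal M :=
      (ENNReal.continuous_mul_const ENNReal.ofReal_ne_top).comp ENNReal.continuous_ofReal
    simpa using (h_cont.tendsto 0).mono_left nhdsWithin_le_nhds
  · intro ε hε n
    refine ((φ n).enorm_setIntegral_det4_le hε (D n)).trans ?_
    gcongr
    exact SkyrmeMap.lintegral_ofReal_le_of_le_density (φ n).energyDensity_le_density
      (h_int n) (hM n)

/-- Vanishing lemma: if the densities f_n = |∇φ_n|² + |A(φ_n)|² + |φ_n − P|⁶
vanish on the sets D_n, then ∫_{D_n} det(φ_n − P, ∇φ_n) → 0. -/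
theorem skyrme_vanishing_lemma (φ : ℕ → SkyrmeMap) (hX : ∀ n, memX (φ n))
    (D : ℕ → Set R3) (hD : ∀ n, MeasurableSet (D n))
    (hint : ∀ n, Integrable
      (fun x => energyDensity (φ n) x + (nsq ((φ n).toFun x - northPole)) ^ 3) volume)
    (M : ℝ)
    (hM : ∀ n, (∫ x, (energyDensity (φ n) x + (nsq ((φ n).toFun x - northPole)) ^ 3)) ≤ M)
    (hvan : ∀ R > (0 : ℝ), Tendsto (fun n => ⨆ y : R3,
        ∫ x in eball y R ∩ D n,
          (energyDensity (φ n) x + (nsq ((φ n).toFun x - northPole)) ^ 3))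
      atTop (𝓝 0)) :
    Tendsto (fun n => ∫ x in D n,
        det4 ((φ n).toFun x - northPole)
          ((φ n).pderiv 0 x) ((φ n).pderiv 1 x) ((φ n).pderiv 2 x))
      atTop (𝓝 0) :=
  skyrme_vanishing_lemma_general φ D hint M hM hvan
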